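/- Let K be any field, and let G_25 ⊆ S_8 be the subgroup of order 56 generated by σ_1 = (1,2)(3,4)(5,6)(7,8), σ_2 = (1,3)(2,4)(5,7)(6,8), κ = (1,5)(2,6)(3,7)(4,8), and θ = (2,3,7,4,5,6,8). Then the fixed field K(x_1,…,x_8)^{G_25} is K-rational. -/

import Mathlib

noncomputable section

/-- The rational function field `K(x_i : i ∈ I)` over `K`, realized as the fraction field
of the multivariate polynomial ring. -/
abbrev RFF (K : Type) [Field K] (I : Type) := FractionRing (MvPolynomial I K)

/-- The image of the variable `x_i` in the rational function field `K(x_i : i ∈ I)`. -/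
noncomputable def Xvar (K : Type) [Field K] (I : Type) (i : I) : RFF K I :=
  algebraMap (MvPolynomial I K) (RFF K I) (MvPolynomial.X i)

/-- Permutations of the variables as `K`-algebra automorphisms of the polynomial ring. -/
def renameHom (K : Type) [Field K] (I : Type) :
    Equiv.Perm I →* (MvPolynomial I K ≃ₐ[K] MvPolynomial I K) where
  toFun σ := MvPolynomial.renameEquiv K σ
  map_one' := MvPolynomial.renameEquiv_refl K
  map_mul' σ τ := (MvPolynomial.renameEquiv_trans K τ σ).symm

/-- The action of permutations of the variables on `K(x_i : i ∈ I)` by `K`-automorphisms,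
determined by `σ(x_i) = x_{σ(i)}`. -/
noncomputable def permHom (K : Type) [Field K] (I : Type) :
    Equiv.Perm I →* (RFF K I ≃ₐ[K] RFF K I) :=
  (IsFractionRing.fieldEquivOfAlgEquivHom K (RFF K I)).comp (renameHom K I)

/-- The fixed field `K(x_i : i ∈ I)^G` of a group `G` of permutations of the variables. -/
noncomputable def fixedSub (K : Type) [Field K] (I : Type) (G : Subgroup (Equiv.Perm I)) :
    IntermediateField K (RFF K I) :=
  IntermediateField.fixedField (G.map (permHom K I))

/-- An extension `L/K` is `K`-rational if it is purely transcendental over `K`, i.e. generated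
by finitely many algebraically independent elements. -/
def IsRatExt (K : Type) [Field K] (L : Type*) [Field L] [Algebra K L] : Prop :=
  ∃ (n : ℕ) (t : Fin n → L), AlgebraicIndependent K t ∧
    IntermediateField.adjoin K (Set.range t) = ⊤

/-!
Identify the eight variables with the points of `𝔽₈` so that `G₂₅` becomes the group of affine maps
`x ↦ ζ ^ k * x + b`, where `ζ` generates `𝔽₈ˣ`.

The invariants of the translations are generated by the sum of the variables and seven elements
permuted cyclically by `ζ`. Outside characteristic two these are the quotients
`y i * y (i + 1) / y (i + 5)`, where the `y i` are the components of the variables along the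
nontrivial characters of `𝔽₈`. In characteristic two the variables are taken as weights, and the
seven elements are third central moments of the linear forms on `𝔽₈`.

It remains to divide seven independent elements by a cyclic shift. They are the coefficients of a
unit `α(g)` of the group algebra of the cyclic group of order seven; outside characteristic seven
the invariants are generated by the coefficients of `α(g) * α(g ^ 5) / α(g ^ 6)`. In characteristic
seven they are generated by central moments of the points of `ZMod 7`, weighted by the seven
elements, and the Artin–Schreier invariant of the mean.

The degrees over the fields generated by these invariants are at most `8` and `7`. As `G₂₅` has
order at least `56`, the eight invariants generate the fixed field, and eight generators of a field
of transcendence degree eight are algebraically independent.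
-/

universe u

section Degree

open IntermediateField Polynomial

variable {E F : Type*} [Field E] [Field F] [Algebra E F]

lemma rank_adjoin_simple_le_of_pow_eq {P : E[X]} {n : ℕ} (hP : P.degree < n) {a : F}
    (ha : a ^ n = aeval a P) : Module.rank E E⟮a⟯ ≤ n := by
  have hmonic : (X ^ n - P).Monic := monic_X_pow_sub hP
  have hroot : aeval a (X ^ n - P) = 0 := by simp [ha]
  have hint : IsIntegral E a := ⟨_, hmonic, hroot⟩
  have := adjoin.finiteDimensional hint
  rw [← Module.finrank_eq_rank, adjoin.finrank hint, Nat.cast_le]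
  calc (minpoly E a).natDegree ≤ (X ^ n - P).natDegree :=
        natDegree_le_of_dvd (minpoly.dvd E a hroot) hmonic.ne_zero
    _ ≤ n := natDegree_le_of_degree_le ((degree_sub_le _ _).trans
        (max_le (degree_X_pow_le n) hP.le))

lemma rank_adjoin_simple_le_two {a b c : F} (hb : b ∈ (⊥ : IntermediateField E F))
    (hc : c ∈ (⊥ : IntermediateField E F)) (h : a ^ 2 = b * a + c) :
    Module.rank E E⟮a⟯ ≤ (2 : ℕ) := by
  obtain ⟨b, rfl⟩ := mem_bot.1 hb
  obtain ⟨c, rfl⟩ := mem_bot.1 hc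
  exact rank_adjoin_simple_le_of_pow_eq (P := C b * X + C c)
    (degree_linear_le.trans_lt (by norm_num)) (by simp [h])

lemma rank_adjoin_le_of_subset {S T : Set F} (h : S ⊆ adjoin E T) :
    Module.rank E (adjoin E S) ≤ Module.rank E (adjoin E T) :=
  LinearMap.rank_le_of_injective (inclusion (adjoin_le_iff.2 h)).toLinearMap
    (inclusion_injective (adjoin_le_iff.2 h))

lemma rank_adjoin_image_le {ι : Type*} (s : Finset ι) (v : ι → F) {d : ℕ}
    (h : ∀ i ∈ s, Module.rank E E⟮v i⟯ ≤ d) :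
    Module.rank E (adjoin E (v '' s)) ≤ (d : Cardinal) ^ s.card := by
  classical
  induction s using Finset.induction with
  | empty =>
    rw [Finset.coe_empty, Set.image_empty, adjoin_empty, IntermediateField.rank_bot,
      Finset.card_empty, pow_zero]
  | insert i s hi ih =>
    rw [Finset.coe_insert, Set.image_insert_eq, Set.insert_eq, adjoin_union,
      Finset.card_insert_of_notMem hi, pow_succ']
    exact (rank_sup_le _ _).trans (mul_le_mul' (h i (Finset.mem_insert_self i s))
      (ih fun j hj => h j (Finset.mem_insert_of_mem hj)))

lemma rank_adjoin_range_le_card {ι : Type*} [Fintype ι] (z : ι → F)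
    (hone : (1 : F) ∈ Submodule.span E (Set.range z))
    (hmul : ∀ i j, z i * z j ∈ Submodule.span E (Set.range z)) :
    Module.rank E (adjoin E (Set.range z)) ≤ Fintype.card ι := by
  set W := Submodule.span E (Set.range z) with hW
  have hWW : W * W ≤ W := by
    rw [hW, Submodule.span_mul_span, Submodule.span_le]
    rintro _ ⟨_, ⟨i, rfl⟩, _, ⟨j, rfl⟩, rfl⟩
    exact hmul i j
  let A : Subalgebra E F := W.toSubalgebra hone fun x y hx hy => hWW (Submodule.mul_mem_mul hx hy)
  have : FiniteDimensional E W := FiniteDimensional.span_of_finite E (Set.finite_range z)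
  have : FiniteDimensional E A := this
  let L : IntermediateField E F := A.toIntermediateField'
    (isField_of_isIntegral_of_isField' (Field.toIsField E))
  have hLW : Module.rank E L = Module.rank E W := rfl
  have hle : adjoin E (Set.range z) ≤ L := adjoin_le_iff.2 Submodule.subset_span
  calc Module.rank E (adjoin E (Set.range z)) ≤ Module.rank E W := hLW ▸
        LinearMap.rank_le_of_injective (inclusion hle).toLinearMap (inclusion_injective hle)
    _ ≤ Fintype.card ι := Module.finrank_eq_rank E W ▸ mod_cast finrank_range_le_card z

end Degree

section AlgebraicIndependence

open IntermediateField

lemma aeval_ne_zero_of_algebraicIndependent {K F ι : Type*} [CommRing K] [CommRing F]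
    [Algebra K F] {v : ι → F} (hv : AlgebraicIndependent K v) (P : MvPolynomial ι K)
    {a : ι → K} (ha : MvPolynomial.aeval a P ≠ 0) : MvPolynomial.aeval v P ≠ 0 := by
  intro h
  rw [hv.eq_zero_of_aeval_eq_zero P h, map_zero] at ha
  exact ha rfl

open IntermediateField.algebraAdjoinAdjoin in
lemma algebraicIndependent_of_rank_lt_aleph0 {K F ι : Type*} [Field K] [Field F]
    [Algebra K F] [Finite ι] {v w : ι → F} (hv : AlgebraicIndependent K v)
    (hw : Module.rank (adjoin K (Set.range w)) F < Cardinal.aleph0) :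
    AlgebraicIndependent K w := by
  have : FiniteDimensional (adjoin K (Set.range w)) F := Module.rank_lt_aleph0_iff.1 hw
  have : Algebra.IsAlgebraic (Algebra.adjoin K (Set.range w)) F :=
    (IsFractionRing.comap_isAlgebraic_iff (K := adjoin K (Set.range w))).2 inferInstance
  exact (Algebra.IsAlgebraic.isTranscendenceBasis_of_lift_le_trdeg_of_finite K w
    hv.lift_cardinalMk_le_trdeg).1

lemma isRatExt_adjoin {K : Type} [Field K] {F ι : Type*} [Field F] [Algebra K F] [Finite ι]
    {w : ι → F} (hw : AlgebraicIndependent K w) : IsRatExt K (adjoin K (Set.range w)) := by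
  obtain ⟨n, ⟨e⟩⟩ := Finite.exists_equiv_fin ι
  let t : Fin n → adjoin K (Set.range w) :=
    fun i => ⟨w (e.symm i), subset_adjoin K _ ⟨_, rfl⟩⟩
  have ht : (adjoin K (Set.range w)).val ∘ t = w ∘ e.symm := rfl
  refine ⟨n, t, AlgebraicIndependent.of_comp (adjoin K (Set.range w)).val ?_,
    lift_injective _ ?_⟩
  · exact ht ▸ hw.comp e.symm e.symm.injective
  · have himage : (adjoin K (Set.range w)).val '' Set.range t = Set.range w := by
      rw [← Set.range_comp, ht, e.symm.surjective.range_comp]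
    rw [lift_adjoin, lift_top]
    exact congrArg (adjoin K) himage

end AlgebraicIndependence

section RationalFunctionField

open IntermediateField

variable (K : Type) [Field K] (I : Type)

lemma permHom_Xvar (σ : Equiv.Perm I) (i : I) :
    permHom K I σ (Xvar K I i) = Xvar K I (σ i) := by
  simp [permHom, Xvar, renameHom, IsFractionRing.fieldEquivOfAlgEquivHom]

lemma algebraicIndependent_Xvar : AlgebraicIndependent K (Xvar K I) :=
  (MvPolynomial.algebraicIndependent_X I K).map'
    (f := IsScalarTower.toAlgHom K (MvPolynomial I K) (RFF K I))
    (IsFractionRing.injective (MvPolynomial I K) (RFF K I))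

lemma adjoin_range_Xvar : adjoin K (Set.range (Xvar K I)) = ⊤ := by
  have hpoly (p : MvPolynomial I K) :
      algebraMap (MvPolynomial I K) (RFF K I) p ∈ adjoin K (Set.range (Xvar K I)) := by
    induction p using MvPolynomial.induction_on with
    | C a =>
      rw [← MvPolynomial.algebraMap_eq, ← IsScalarTower.algebraMap_apply]
      exact (adjoin K _).algebraMap_mem a
    | add p q hp hq => exact map_add (algebraMap _ (RFF K I)) p q ▸ add_mem hp hq
    | mul_X p i hp =>
      exact map_mul (algebraMap _ (RFF K I)) p _ ▸ mul_mem hp (subset_adjoin K _ ⟨i, rfl⟩)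
  refine eq_top_iff.2 fun x _ => ?_
  obtain ⟨a, b, -, rfl⟩ := IsFractionRing.div_surjective (A := MvPolynomial I K) x
  exact div_mem (hpoly a) (hpoly b)

lemma permHom_injective : Function.Injective (permHom K I) := fun σ τ h => Equiv.ext fun i =>
  (algebraicIndependent_Xvar K I).injective <| by
    rw [← permHom_Xvar, h, permHom_Xvar]

variable {I}

lemma mem_fixedSub_closure {S : Set (Equiv.Perm I)} {x : RFF K I}
    (h : ∀ σ ∈ S, permHom K I σ x = x) : x ∈ fixedSub K I (Subgroup.closure S) := by
  have hle : Subgroup.closure S ≤ (MulAction.stabilizer _ x).comap (permHom K I) :=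
    (Subgroup.closure_le _).2 h
  rw [fixedSub, mem_fixedField_iff]
  rintro _ ⟨σ, hσ, rfl⟩
  exact hle hσ

lemma finrank_fixedSub [Finite I] (G : Subgroup (Equiv.Perm I)) :
    Module.finrank (fixedSub K I G) (RFF K I) = Nat.card G := by
  have e := G.equivMapOfInjective _ (permHom_injective K I)
  have : Finite (G.map (permHom K I)) := Finite.of_equiv _ e.toEquiv
  have : Fintype (G.map (permHom K I)) := Fintype.ofFinite _
  rw [Nat.card_congr e.toEquiv, Nat.card_eq_fintype_card]
  exact FixedPoints.finrank_eq_card (G.map (permHom K I)) (RFF K I)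

theorem isRatExt_fixedSub [Finite I] (G : Subgroup (Equiv.Perm I)) {w : I → RFF K I}
    (hw : ∀ i, w i ∈ fixedSub K I G)
    (hrank : Module.rank (adjoin K (Set.range w)) (RFF K I) ≤ Nat.card G) :
    IsRatExt K (fixedSub K I G) := by
  have hlt := hrank.trans_lt Cardinal.natCast_lt_aleph0
  have : FiniteDimensional (adjoin K (Set.range w)) (RFF K I) := Module.rank_lt_aleph0_iff.1 hlt
  have heq : adjoin K (Set.range w) = fixedSub K I G := by
    refine eq_of_le_of_finrank_le' (adjoin_le_iff.2 (Set.range_subset_iff.2 hw)) ?_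
    rw [finrank_fixedSub, ← Nat.cast_le (α := Cardinal), Module.finrank_eq_rank]
    exact hrank
  exact heq ▸ isRatExt_adjoin
    (algebraicIndependent_of_rank_lt_aleph0 (algebraicIndependent_Xvar K I) hlt)

end RationalFunctionField

/-! ### The affine group of the field with eight elements -/

section FieldWithEightElements

/-- The field `𝔽₈ = 𝔽₂(ζ)`, `ζ³ = 1 + ζ`, with its elements encoded by their logarithms:
`some i` stands for `ζ ^ i` and `none` for `0`. -/
abbrev F8 := Option (ZMod 7)

/-- Zech logarithms of `𝔽₈`: for `i ≠ 0` one has `1 + ζ ^ i = ζ ^ zech i`. The value at `0` is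
junk. -/
def zech : ZMod 7 → ZMod 7 := ![0, 3, 6, 1, 5, 4, 2]

/-- The translation `x ↦ x + ζ ^ j` of `𝔽₈`. -/
def translation (j : ZMod 7) : Equiv.Perm F8 :=
  Function.Involutive.toPerm
    (fun v => v.elim (some j) fun k => if k = j then none else some (j + zech (k - j)))
    (by unfold Function.Involutive; decide +revert)

/-- The multiplication by `ζ` on `𝔽₈`. -/
def scaling : Equiv.Perm F8 := Equiv.optionCongr (Equiv.addRight 1)

/-- The seven nonzero additive maps `𝔽₈ → 𝔽₂`, permuted cyclically by `scaling`. -/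
def form (i : ZMod 7) (v : F8) : ZMod 2 :=
  v.elim 0 fun k => if k - i ∈ ({1, 2, 4} : Finset (ZMod 7)) then 0 else 1

/-- The nontrivial additive character `(-1) ^ form i` of `𝔽₈`. -/
def character (i : ZMod 7) (v : F8) : ℤ := if form i v = 0 then 1 else -1

lemma form_eq_form_translation_add :
    ∀ i j v, form i v = form i (translation j v) + form i (some j) := by decide

lemma form_scaling : ∀ i v, form (i + 1) (scaling v) = form i v := by decide

lemma form_add_form_add_one : ∀ i v, form i v + form (i + 1) v = form (i + 5) v := by decide

lemma character_eq_mul_character_translation :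
    ∀ i j v, character i v = character i (some j) * character i (translation j v) := by decide

lemma character_scaling : ∀ i v, character (i + 1) (scaling v) = character i v := by decide

lemma character_mul_character_add_one :
    ∀ i v, character i v * character (i + 1) v = character (i + 5) v := by decide

lemma one_add_sum_character_mul_character :
    ∀ v w, 1 + ∑ i, character i v * character i w = if v = w then 8 else 0 := by decide

lemma prod_form_eq_ite : ∀ v w : F8,
    (1 + form 0 v + form 0 w) * (1 + form 1 v + form 1 w) * (1 + form 2 v + form 2 w) =
      if v = w then 1 else 0 := by decide

end FieldWithEightElements

/-! ### The quotient by the translations -/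

section Translations

open IntermediateField

variable {F : Type u} [Field F]

lemma map_sum_of_map_eq {ι : Type*} [Fintype ι] {X : ι → F} {f : F →+* F} {σ : Equiv.Perm ι}
    (hf : ∀ v, f (X v) = X (σ v)) : f (∑ v, X v) = ∑ v, X v := by
  simp only [map_sum, hf, Equiv.sum_comp σ]

/-- The family `z` generates, together with `∑ v, X v`, the invariants of the translations in the
field generated by a family `X` indexed by `𝔽₈`, and it is permuted cyclically by `scaling`.
Generation is expressed by a bound on the degree, over every field containing these elements. -/
structure IsTranslationQuotient (X : F8 → F) (z : ZMod 7 → F) : Prop where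
  map_of_translation (f : F →+* F) (j : ZMod 7) (hf : ∀ v, f (X v) = X (translation j v))
    (i : ZMod 7) : f (z i) = z i
  map_of_scaling (f : F →+* F) (hf : ∀ v, f (X v) = X (scaling v)) (i : ZMod 7) :
    f (z i) = z (i + 1)
  rank_adjoin_le (E : Type u) [Field E] [Algebra E F]
    (hsum : ∑ v, X v ∈ (⊥ : IntermediateField E F))
    (hz : ∀ i, z i ∈ (⊥ : IntermediateField E F)) :
    Module.rank E (adjoin E (Set.range X)) ≤ 8

section OddCharacteristic

/-- The component of the family `X` along `character i`. -/
def charSum (X : F8 → F) (i : ZMod 7) : F := ∑ v, (character i v : F) * X v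

/-- The multiplicative relation between the characters makes this quotient translation-invariant. -/
def charQuotient (X : F8 → F) (i : ZMod 7) : F :=
  charSum X i * charSum X (i + 1) / charSum X (i + 5)

variable {X : F8 → F} {f : F →+* F}

lemma map_charSum_of_translation {j : ZMod 7} (hf : ∀ v, f (X v) = X (translation j v))
    (i : ZMod 7) : f (charSum X i) = character i (some j) * charSum X i := by
  calc f (charSum X i) = ∑ v, (character i v : F) * X (translation j v) := by
        simp only [charSum, map_sum, map_mul, map_intCast, hf]
    _ = ∑ v, (character i (some j) : F) *
          (character i (translation j v) * X (translation j v)) := by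
        refine Finset.sum_congr rfl fun v _ => ?_
        rw [character_eq_mul_character_translation i j v, Int.cast_mul, mul_assoc]
    _ = character i (some j) * charSum X i := by
        rw [← Finset.mul_sum, charSum,
          Equiv.sum_comp (translation j) fun v => (character i v : F) * X v]

lemma map_charSum_of_scaling (hf : ∀ v, f (X v) = X (scaling v)) (i : ZMod 7) :
    f (charSum X i) = charSum X (i + 1) := by
  simp only [charSum, map_sum, map_mul, map_intCast, hf, ← character_scaling i]
  exact Equiv.sum_comp scaling fun v => (character (i + 1) v : F) * X v

lemma eight_mul_eq_sum_charSum (X : F8 → F) (v : F8) :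
    8 * X v = ∑ w, X w + ∑ i, (character i v : F) * charSum X i := by
  have orthogonality (w : F8) :
      1 + ∑ i, (character i v : F) * character i w = if v = w then 8 else 0 := by
    exact_mod_cast congrArg (Int.cast : ℤ → F) (one_add_sum_character_mul_character v w)
  calc 8 * X v = ∑ w, (1 + ∑ i, (character i v : F) * character i w) * X w := by
        simp only [orthogonality, ite_mul, zero_mul, Finset.sum_ite_eq, Finset.mem_univ, if_true]
    _ = ∑ w, X w + ∑ i, (character i v : F) * charSum X i := by
        simp only [add_mul, one_mul, Finset.sum_add_distrib, Finset.sum_mul, charSum,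
          Finset.mul_sum, mul_assoc]
        rw [Finset.sum_comm]

lemma charSum_sq (h : ∀ i, charSum X i ≠ 0) (i : ZMod 7) :
    charSum X i ^ 2 = charQuotient X (i + 1) * charQuotient X (i + 3) * charQuotient X (i + 6) /
      charQuotient X (i + 2) := by
  have h7 : i + 7 = i := add_zero i
  have h8 : i + 8 = i + 1 := rfl
  have h11 : i + 11 = i + 4 := rfl
  simp only [charQuotient, add_assoc]
  norm_num only [h7, h8, h11]
  field_simp [h]

lemma charSum_mem {E : Type*} [Field E] [Algebra E F] (h : ∀ i, charSum X i ≠ 0)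
    {L : IntermediateField E F} (hz : ∀ i, charQuotient X i ∈ L)
    (h0 : charSum X 0 ∈ L) (h1 : charSum X 1 ∈ L) (h2 : charSum X 2 ∈ L) (i : ZMod 7) :
    charSum X i ∈ L := by
  have hstep (i : ZMod 7) (hi : charSum X i ∈ L) (hi' : charSum X (i + 1) ∈ L) :
      charSum X (i + 5) ∈ L := by
    have : charSum X (i + 5) = charSum X i * charSum X (i + 1) / charQuotient X i := by
      rw [charQuotient]
      field_simp [h]
    exact this ▸ div_mem (mul_mem hi hi') (hz i)
  have h5 : charSum X 5 ∈ L := hstep 0 h0 h1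
  have h6 : charSum X 6 ∈ L := hstep 1 h1 h2
  have h4 : charSum X 4 ∈ L := hstep 6 h6 h0
  have h3 : charSum X 3 ∈ L := hstep 5 h5 h6
  fin_cases i <;> assumption

theorem isTranslationQuotient_charQuotient (h2 : (2 : F) ≠ 0) (h : ∀ i, charSum X i ≠ 0) :
    IsTranslationQuotient X (charQuotient X) where
  map_of_translation f j hf i := by
    have hχ : (character i (some j) : F) * character (i + 1) (some j)
        = character (i + 5) (some j) := mod_cast congrArg _ (character_mul_character_add_one i _)
    have hχ0 : (character (i + 5) (some j) : F) ≠ 0 := by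
      unfold character; split <;> simp
    simp only [charQuotient, map_div₀, map_mul, map_charSum_of_translation hf]
    rw [mul_mul_mul_comm, hχ, mul_div_mul_left _ _ hχ0]
  map_of_scaling f hf i := by
    simp only [charQuotient, map_div₀, map_mul, map_charSum_of_scaling hf]
    rw [add_right_comm i 5 1]
  rank_adjoin_le E _ _ hsum hz := by
    set L := adjoin E (charSum X '' ({0, 1, 2} : Finset (ZMod 7)))
    have hbot : ⊥ ≤ L := bot_le
    have hgen (i : ZMod 7) (hi : i ∈ ({0, 1, 2} : Finset (ZMod 7))) : charSum X i ∈ L :=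
      subset_adjoin E _ ⟨i, hi, rfl⟩
    have hy := charSum_mem h (fun i => hbot (hz i)) (hgen 0 (by decide)) (hgen 1 (by decide))
      (hgen 2 (by decide))
    have h8 : (8 : F) ≠ 0 := by
      rw [show (8 : F) = 2 ^ 3 by norm_num]
      exact pow_ne_zero 3 h2
    have hX : Set.range X ⊆ L := by
      rintro _ ⟨v, rfl⟩
      rw [← mul_div_cancel_left₀ (X v) h8, eight_mul_eq_sum_charSum X v]
      exact div_mem (add_mem (hbot hsum) (sum_mem fun i _ => mul_mem (intCast_mem L _) (hy i)))
        (ofNat_mem L 8)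
    have hsq (i : ZMod 7) : Module.rank E E⟮charSum X i⟯ ≤ (2 : ℕ) :=
      rank_adjoin_simple_le_two (zero_mem _)
        (div_mem (mul_mem (mul_mem (hz (i + 1)) (hz (i + 3))) (hz (i + 6))) (hz (i + 2)))
        (by rw [zero_mul, zero_add, charSum_sq h i])
    calc Module.rank E (adjoin E (Set.range X)) ≤ Module.rank E L := rank_adjoin_le_of_subset hX
      _ ≤ (2 : ℕ) ^ 3 := rank_adjoin_image_le _ _ fun i _ => hsq i
      _ = 8 := by norm_num

end OddCharacteristic

section CharacteristicTwo

variable [CharP F 2]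

/-- The `F`-valued random variable `form i` on `𝔽₈`. -/
def formValue (F : Type*) [Field F] [CharP F 2] (i : ZMod 7) (v : F8) : F :=
  ZMod.castHom (dvd_refl 2) F (form i v)

/-- The mean of `form i` for the weights `X`. -/
def formMean (X : F8 → F) (i : ZMod 7) : F := (∑ v, X v * formValue F i v) / ∑ v, X v

/-- The deviation of `form i` from its mean for the weights `X`. -/
def deviation (X : F8 → F) (i : ZMod 7) (v : F8) : F := formValue F i v + formMean X i

/-- A third central moment of the forms for the weights `X`: as a translation adds constants to
the forms, it does not change central moments. -/
def centralMoment (X : F8 → F) (i : ZMod 7) : F :=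
  ∑ v, X v * (deviation X i v * deviation X (i + 1) v * deviation X (i + 2) v)

variable {X : F8 → F} {f : F →+* F}

lemma formValue_eq_formValue_translation_add (i j : ZMod 7) (v : F8) :
    formValue F i v = formValue F i (translation j v) + formValue F i (some j) := by
  rw [formValue, form_eq_form_translation_add i j v, map_add, formValue, formValue]

lemma formValue_scaling (i : ZMod 7) (v : F8) :
    formValue F (i + 1) (scaling v) = formValue F i v := by
  rw [formValue, form_scaling, formValue]

lemma formValue_add_formValue_add_one (i : ZMod 7) (v : F8) :
    formValue F i v + formValue F (i + 1) v = formValue F (i + 5) v := by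
  rw [formValue, formValue, ← map_add, form_add_form_add_one, formValue]

lemma map_formValue (f : F →+* F) (i : ZMod 7) (v : F8) :
    f (formValue F i v) = formValue F i v :=
  DFunLike.congr_fun (Subsingleton.elim (f.comp (ZMod.castHom (dvd_refl 2) F)) _) (form i v)

lemma formValue_eq_zero_or_one (i : ZMod 7) (v : F8) :
    formValue F i v = 0 ∨ formValue F i v = 1 := by
  have h (c : ZMod 2) : c = 0 ∨ c = 1 := by decide +revert
  rcases h (form i v) with h | h <;> simp [formValue, h]

lemma map_deviation_of_translation {j : ZMod 7} (hf : ∀ v, f (X v) = X (translation j v))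
    (hsum : ∑ v, X v ≠ 0) (i : ZMod 7) (v : F8) :
    f (deviation X i v) = deviation X i (translation j v) := by
  have hmean : f (formMean X i) = formMean X i + formValue F i (some j) := by
    calc f (formMean X i)
        = (∑ v, X (translation j v) * (formValue F i (translation j v) + formValue F i (some j)))
            / ∑ v, X v := by
          simp only [formMean, map_div₀, map_sum_of_map_eq hf]
          simp only [map_sum, map_mul, hf, map_formValue,
            ← formValue_eq_formValue_translation_add]
      _ = formMean X i + formValue F i (some j) := by
          rw [Equiv.sum_comp (translation j) fun v =>
            X v * (formValue F i v + formValue F i (some j))]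
          simp only [mul_add, Finset.sum_add_distrib, ← Finset.sum_mul, formMean]
          field_simp
  simp only [deviation, map_add, map_formValue, hmean]
  rw [formValue_eq_formValue_translation_add i j v]
  linear_combination CharTwo.add_self_eq_zero (formValue F i (some j))

lemma map_deviation_of_scaling (hf : ∀ v, f (X v) = X (scaling v)) (i : ZMod 7) (v : F8) :
    f (deviation X i v) = deviation X (i + 1) (scaling v) := by
  have hmean : f (formMean X i) = formMean X (i + 1) := by
    simp only [formMean, map_div₀, map_sum_of_map_eq hf]
    simp only [map_sum, map_mul, hf, map_formValue, ← formValue_scaling i]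
    rw [Equiv.sum_comp scaling fun v => X v * formValue F (i + 1) v]
  simp only [deviation, map_add, map_formValue, hmean, formValue_scaling]

lemma deviation_add_deviation_add_one (i : ZMod 7) (v : F8) :
    deviation X i v + deviation X (i + 1) v = deviation X (i + 5) v := by
  simp only [deviation, formMean, ← formValue_add_formValue_add_one i, mul_add,
    Finset.sum_add_distrib]
  ring

lemma deviation_sq (i : ZMod 7) (v : F8) :
    deviation X i v ^ 2 = deviation X i v + (formMean X i ^ 2 + formMean X i) := by
  have hidem : formValue F i v ^ 2 = formValue F i v := by
    rcases formValue_eq_zero_or_one (F := F) i v with h | h <;> simp [h]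
  rw [deviation, CharTwo.add_sq, hidem]
  linear_combination -formMean X i * CharTwo.two_eq_zero (R := F)

lemma sum_mul_deviation (hsum : ∑ v, X v ≠ 0) (i : ZMod 7) :
    ∑ v, X v * deviation X i v = 0 := by
  simp only [deviation, mul_add, Finset.sum_add_distrib, ← Finset.sum_mul, formMean]
  rw [mul_div_cancel₀ _ hsum]
  exact CharTwo.add_self_eq_zero _

lemma sum_mul_deviation_sq (hsum : ∑ v, X v ≠ 0) (i : ZMod 7) :
    ∑ v, X v * deviation X i v ^ 2 = (∑ v, X v) * (formMean X i ^ 2 + formMean X i) := by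
  simp only [deviation_sq, mul_add _ (deviation X i _), Finset.sum_add_distrib,
    sum_mul_deviation hsum, zero_add, Finset.sum_mul]

lemma sum_mul_deviation_mul_deviation_add_one (hsum : ∑ v, X v ≠ 0) (i : ZMod 7) :
    ∑ v, X v * (deviation X i v * deviation X (i + 1) v) =
      centralMoment X i + centralMoment X (i + 6) := by
  have hi (v : F8) : X v * (deviation X (i + 6) v * deviation X i v * deviation X (i + 1) v) =
      X v * (deviation X i v * deviation X (i + 1) v * deviation X (i + 2) v) +
        X v * (deviation X i v * deviation X (i + 1) v) +
        (formMean X (i + 1) ^ 2 + formMean X (i + 1)) * (X v * deviation X i v) := by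
    have h6 : deviation X (i + 6) v = deviation X (i + 1) v + deviation X (i + 2) v :=
      add_assoc i 1 5 ▸ add_assoc i 1 1 ▸ (deviation_add_deviation_add_one (i + 1) v).symm
    rw [h6]
    linear_combination X v * deviation X i v * deviation_sq (X := X) (i + 1) v
  have hmoment : centralMoment X (i + 6) = centralMoment X i +
      ∑ v, X v * (deviation X i v * deviation X (i + 1) v) := by
    have h7 : i + 6 + 1 = i := by rw [add_assoc]; exact add_zero i
    have h8 : i + 6 + 2 = i + 1 := by rw [add_assoc]; rfl
    rw [centralMoment, h7, h8]
    simp only [hi, Finset.sum_add_distrib, ← Finset.mul_sum, sum_mul_deviation hsum, mul_zero,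
      add_zero, centralMoment]
  rw [hmoment, CharTwo.add_cancel_left]

lemma sum_mul_deviation_mul_deviation_add_two (hsum : ∑ v, X v ≠ 0) (i : ZMod 7) :
    ∑ v, X v * (deviation X i v * deviation X (i + 2) v) =
      centralMoment X i + centralMoment X (i + 5) := by
  have hi (v : F8) : X v * (deviation X (i + 5) v * deviation X (i + 6) v * deviation X i v) =
      X v * (deviation X i v * deviation X (i + 1) v * deviation X (i + 2) v) +
        X v * (deviation X i v * deviation X (i + 2) v) +
        (formMean X i ^ 2 + formMean X i) *
          (X v * deviation X (i + 1) v + X v * deviation X (i + 2) v) +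
        (formMean X (i + 1) ^ 2 + formMean X (i + 1)) * (X v * deviation X i v) := by
    have h6 : deviation X (i + 6) v = deviation X (i + 1) v + deviation X (i + 2) v :=
      add_assoc i 1 5 ▸ add_assoc i 1 1 ▸ (deviation_add_deviation_add_one (i + 1) v).symm
    rw [h6, ← deviation_add_deviation_add_one i v]
    linear_combination X v * deviation X i v * deviation_sq (X := X) (i + 1) v +
      X v * (deviation X (i + 1) v + deviation X (i + 2) v) * deviation_sq (X := X) i v +
      X v * deviation X i v * deviation X (i + 1) v * CharTwo.two_eq_zero (R := F)
  have hmoment : centralMoment X (i + 5) = centralMoment X i +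
      ∑ v, X v * (deviation X i v * deviation X (i + 2) v) := by
    have h6 : i + 5 + 1 = i + 6 := by rw [add_assoc]; rfl
    have h7 : i + 5 + 2 = i := by rw [add_assoc]; exact add_zero i
    rw [centralMoment, h6, h7]
    simp only [hi, Finset.sum_add_distrib, ← Finset.mul_sum, sum_mul_deviation hsum, mul_zero,
      add_zero, centralMoment]
  rw [hmoment, CharTwo.add_cancel_left]

lemma sum_mul_formMean_sq_add_formMean (hsum : ∑ v, X v ≠ 0) (i : ZMod 7) :
    (∑ v, X v) * (formMean X i ^ 2 + formMean X i) = centralMoment X i + centralMoment X (i + 6) +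
      (centralMoment X (i + 5) + centralMoment X (i + 3)) := by
  have h7 : i + 5 + 2 = i := by rw [add_assoc]; exact add_zero i
  have h10 : i + 5 + 5 = i + 3 := by rw [add_assoc]; rfl
  have hcov := sum_mul_deviation_mul_deviation_add_two hsum (i + 5)
  rw [h7, h10] at hcov
  rw [← sum_mul_deviation_sq hsum, ← sum_mul_deviation_mul_deviation_add_one hsum, ← hcov,
    ← Finset.sum_add_distrib]
  refine Finset.sum_congr rfl fun v _ => ?_
  rw [← deviation_add_deviation_add_one i v]
  linear_combination (-X v * deviation X i v * deviation X (i + 1) v) *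
    CharTwo.two_eq_zero (R := F)

lemma prod_one_add_deviation_add_deviation (X : F8 → F) (v w : F8) :
    (1 + deviation X 0 v + deviation X 0 w) * (1 + deviation X 1 v + deviation X 1 w) *
      (1 + deviation X 2 v + deviation X 2 w) = if v = w then 1 else 0 := by
  have hfactor (k : ZMod 7) : 1 + deviation X k v + deviation X k w =
      1 + formValue F k v + formValue F k w := by
    rw [deviation, deviation]
    linear_combination formMean X k * CharTwo.two_eq_zero (R := F)
  have hform := congrArg (ZMod.castHom (dvd_refl 2) F) (prod_form_eq_ite v w)
  simp only [map_mul, map_add, map_one, apply_ite (ZMod.castHom (dvd_refl 2) F), map_zero] at hform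
  simp only [hfactor]
  exact hform

/-- Expand the product in
`X v = ∑ w, X w * ∏ k < 3, (1 + deviation X k v + deviation X k w)`. -/
lemma eq_centralMoment_add (hsum : ∑ v, X v ≠ 0) (v : F8) :
    X v = centralMoment X 0 +
      (1 + deviation X 2 v) * (centralMoment X 0 + centralMoment X 6) +
      (1 + deviation X 1 v) * (centralMoment X 0 + centralMoment X 5) +
      (1 + deviation X 0 v) * (centralMoment X 1 + centralMoment X 0) +
      (1 + deviation X 0 v) * (1 + deviation X 1 v) * (1 + deviation X 2 v) * ∑ w, X w := by
  have h01 := sum_mul_deviation_mul_deviation_add_one hsum 0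
  have h12 := sum_mul_deviation_mul_deviation_add_one hsum 1
  have h02 := sum_mul_deviation_mul_deviation_add_two hsum 0
  calc X v = ∑ w, X w * ((1 + deviation X 0 v + deviation X 0 w) *
      (1 + deviation X 1 v + deviation X 1 w) * (1 + deviation X 2 v + deviation X 2 w)) := by
        simp [prod_one_add_deviation_add_deviation]
    _ = ∑ w, (X w * (deviation X 0 w * deviation X 1 w * deviation X 2 w) +
          (1 + deviation X 2 v) * (X w * (deviation X 0 w * deviation X 1 w)) +
          (1 + deviation X 1 v) * (X w * (deviation X 0 w * deviation X 2 w)) +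
          (1 + deviation X 0 v) * (X w * (deviation X 1 w * deviation X 2 w)) +
          (1 + deviation X 0 v) * (1 + deviation X 1 v) * (X w * deviation X 2 w) +
          (1 + deviation X 0 v) * (1 + deviation X 2 v) * (X w * deviation X 1 w) +
          (1 + deviation X 1 v) * (1 + deviation X 2 v) * (X w * deviation X 0 w) +
          (1 + deviation X 0 v) * (1 + deviation X 1 v) * (1 + deviation X 2 v) * X w) :=
        Finset.sum_congr rfl fun w _ => by ring
    _ = _ := by
        simp only [Finset.sum_add_distrib, ← Finset.mul_sum, sum_mul_deviation hsum, mul_zero,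
          add_zero]
        exact congrArg₂ _ (congrArg₂ _ (congrArg₂ _ (congrArg₂ _ rfl (congrArg _ h01))
          (congrArg _ h02)) (congrArg _ h12)) rfl

lemma mem_of_centralMoment_mem {E : Type*} [Field E] [Algebra E F] {L : IntermediateField E F}
    (hsum : ∑ v, X v ≠ 0) (hS : ∑ v, X v ∈ L) (hz : ∀ i, centralMoment X i ∈ L)
    (hmean : ∀ i ∈ ({0, 1, 2} : Finset (ZMod 7)), formMean X i ∈ L) (v : F8) : X v ∈ L := by
  have hb (i) (hi : i ∈ ({0, 1, 2} : Finset (ZMod 7))) : 1 + deviation X i v ∈ L := by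
    refine add_mem (one_mem L) (add_mem ?_ (hmean i hi))
    rcases formValue_eq_zero_or_one (F := F) i v with h | h <;> rw [h]
    exacts [zero_mem L, one_mem L]
  have hzz (i j) : centralMoment X i + centralMoment X j ∈ L := add_mem (hz i) (hz j)
  have hb0 := hb 0 (by decide)
  have hb1 := hb 1 (by decide)
  have hb2 := hb 2 (by decide)
  rw [eq_centralMoment_add hsum v]
  exact add_mem (add_mem (add_mem (add_mem (hz 0) (mul_mem hb2 (hzz 0 6)))
    (mul_mem hb1 (hzz 0 5))) (mul_mem hb0 (hzz 1 0)))
    (mul_mem (mul_mem (mul_mem hb0 hb1) hb2) hS)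

theorem isTranslationQuotient_centralMoment (hsum : ∑ v, X v ≠ 0) :
    IsTranslationQuotient X (centralMoment X) where
  map_of_translation f j hf i := by
    simp only [centralMoment, map_sum, map_mul, hf, map_deviation_of_translation hf hsum]
    exact Equiv.sum_comp (translation j) fun v =>
      X v * (deviation X i v * deviation X (i + 1) v * deviation X (i + 2) v)
  map_of_scaling f hf i := by
    simp only [centralMoment, map_sum, map_mul, hf, map_deviation_of_scaling hf]
    rw [add_right_comm i 1 1, add_right_comm i 2 1]
    exact Equiv.sum_comp scaling fun v =>
      X v * (deviation X (i + 1) v * deviation X (i + 1 + 1) v * deviation X (i + 1 + 2) v)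
  rank_adjoin_le E _ _ hS hz := by
    set L := adjoin E (formMean X '' ({0, 1, 2} : Finset (ZMod 7)))
    have hbot : ⊥ ≤ L := bot_le
    have hX : Set.range X ⊆ L := Set.range_subset_iff.2 <|
      mem_of_centralMoment_mem hsum (hbot hS) (fun i => hbot (hz i)) fun i hi =>
        subset_adjoin E _ ⟨i, hi, rfl⟩
    have hdegree (i : ZMod 7) : Module.rank E E⟮formMean X i⟯ ≤ (2 : ℕ) := by
      have hmem : formMean X i ^ 2 + formMean X i ∈ (⊥ : IntermediateField E F) := by
        rw [← mul_div_cancel_left₀ (formMean X i ^ 2 + formMean X i) hsum,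
          sum_mul_formMean_sq_add_formMean hsum i]
        exact div_mem (add_mem (add_mem (hz _) (hz _)) (add_mem (hz _) (hz _))) hS
      exact rank_adjoin_simple_le_two (neg_mem (one_mem _)) hmem (by ring)
    calc Module.rank E (adjoin E (Set.range X)) ≤ Module.rank E L := rank_adjoin_le_of_subset hX
      _ ≤ (2 : ℕ) ^ 3 := rank_adjoin_image_le _ _ fun i _ => hdegree i
      _ = 8 := by norm_num

end CharacteristicTwo

theorem exists_isTranslationQuotient {K : Type*} [Field K] [Algebra K F] {X : F8 → F}
    (hX : AlgebraicIndependent K X) : ∃ z, IsTranslationQuotient X z := by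
  by_cases h2 : (2 : F) = 0
  · have : CharP F 2 := CharTwo.of_one_ne_zero_of_two_eq_zero one_ne_zero h2
    have hsum : ∑ v, X v ≠ 0 := by
      simpa using aeval_ne_zero_of_algebraicIndependent hX (∑ v, MvPolynomial.X v)
        (a := Pi.single none 1) (by simp)
    exact ⟨_, isTranslationQuotient_centralMoment hsum⟩
  · have hy (i : ZMod 7) : charSum X i ≠ 0 := by
      have := aeval_ne_zero_of_algebraicIndependent hX
        (∑ v, (character i v : MvPolynomial F8 K) * MvPolynomial.X v)
        (a := Pi.single none 1) (by simp [show character i none = 1 from rfl])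
      simpa [charSum] using this
    exact ⟨_, isTranslationQuotient_charQuotient h2 hy⟩

end Translations

/-! ### The quotient by a cyclic permutation of prime order -/

section CyclicShift

open IntermediateField

variable {F : Type u} [Field F]

/-- The family `t` generates the invariants of the cyclic shifts in the field generated by the
family `z` indexed by `ZMod q`. Generation is expressed by a bound on the degree, over every field
containing `t`. -/
structure IsShiftQuotient {q : ℕ} [NeZero q] (z t : ZMod q → F) : Prop where
  map_eq_self (f : F →+* F) (e : ZMod q) (hf : ∀ i, f (z i) = z (i + e)) (i : ZMod q) :
    f (t i) = t i
  rank_adjoin_le (E : Type u) [Field E] [Algebra E F]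
    (ht : ∀ i, t i ∈ (⊥ : IntermediateField E F)) :
    Module.rank E (adjoin E (Set.range z)) ≤ q

section EqualCharacteristic

variable {q : ℕ} [Fact q.Prime] [CharP F q]

/-- The mean of the points of `ZMod q`, with values in `F`, for the weights `z`. -/
def shiftMean (z : ZMod q → F) : F := (∑ i, z i * i.cast) / ∑ i, z i

/-- The central moments of the points of `ZMod q`, with values in `F`, for the weights `z`. -/
def shiftMoment (z : ZMod q → F) (k : ℕ) : F := ∑ i, z i * (i.cast - shiftMean z) ^ k

/-- The central moments below `q`, with the first one, which vanishes, replaced by the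
Artin–Schreier invariant of the mean. -/
def shiftInvariant (z : ZMod q → F) (i : ZMod q) : F :=
  if i = 1 then shiftMean z ^ q - shiftMean z else shiftMoment z i.val

variable {z : ZMod q → F} {f : F →+* F} {e : ZMod q}

omit [CharP F q] in
lemma map_zmodCast (f : F →+* F) (i : ZMod q) : f i.cast = i.cast := by
  rw [← ZMod.natCast_val, map_natCast]

lemma map_shiftMean (hsum : ∑ i, z i ≠ 0) (hf : ∀ i, f (z i) = z (i + e)) :
    f (shiftMean z) = shiftMean z - e.cast := by
  have hf' : ∀ i, f (z i) = z (Equiv.addRight e i) := hf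
  calc f (shiftMean z) = (∑ i, z (i + e) * ((i + e).cast - e.cast)) / ∑ i, z i := by
        rw [shiftMean, map_div₀, map_sum_of_map_eq hf']
        simp only [map_sum, map_mul, hf, map_zmodCast, ZMod.cast_add', add_sub_cancel_right]
    _ = (∑ i, z i * (i.cast - e.cast)) / ∑ i, z i := by
        rw [← Equiv.sum_comp (Equiv.addRight e) fun i => z i * (i.cast - e.cast : F)]
        rfl
    _ = shiftMean z - e.cast := by
        simp only [mul_sub, Finset.sum_sub_distrib, ← Finset.sum_mul, shiftMean]
        field_simp

lemma map_shiftMoment (hsum : ∑ i, z i ≠ 0) (hf : ∀ i, f (z i) = z (i + e)) (k : ℕ) :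
    f (shiftMoment z k) = shiftMoment z k := by
  calc f (shiftMoment z k) = ∑ i, z (i + e) * ((i + e).cast - shiftMean z) ^ k := by
        simp only [shiftMoment, map_sum, map_mul, map_pow, map_sub, hf, map_zmodCast,
          map_shiftMean hsum hf, ZMod.cast_add', sub_sub_eq_add_sub]
    _ = shiftMoment z k :=
        Equiv.sum_comp (Equiv.addRight e) fun i => z i * (i.cast - shiftMean z) ^ k

omit [CharP F q] in
lemma shiftMoment_one (hsum : ∑ i, z i ≠ 0) : shiftMoment z 1 = 0 := by
  simp only [shiftMoment, pow_one, mul_sub, Finset.sum_sub_distrib, ← Finset.sum_mul, shiftMean]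
  rw [mul_div_cancel₀ _ hsum, sub_self]

lemma eq_sum_shiftMoment (z : ZMod q → F) (j : ZMod q) :
    z j = shiftMoment z 0 - ∑ k ∈ Finset.range q,
      shiftMoment z k * ((shiftMean z - j.cast) ^ (q - 1 - k) * (q - 1).choose k) := by
  have hq : q - 1 + 1 = q := Nat.sub_add_cancel (Fact.out : q.Prime).one_le
  have hq' : 1 < q := (Fact.out : q.Prime).one_lt
  have hindicator (i : ZMod q) :
      (1 : F) - (i.cast - j.cast) ^ (q - 1) = if i = j then 1 else 0 := by
    split_ifs with h
    · rw [h, sub_self, zero_pow (Nat.sub_pos_of_lt hq').ne', sub_zero]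
    · rw [← ZMod.cast_sub', ← ZMod.cast_pow', ZMod.pow_card_sub_one_eq_one (sub_ne_zero.2 h),
        ZMod.cast_one', sub_self]
  have hbinomial (i : ZMod q) : ((i.cast : F) - j.cast) ^ (q - 1) = ∑ k ∈ Finset.range q,
      (i.cast - shiftMean z) ^ k * ((shiftMean z - j.cast) ^ (q - 1 - k) * (q - 1).choose k) := by
    rw [← sub_add_sub_cancel _ (shiftMean z), add_pow, hq]
    simp only [mul_assoc]
  calc z j = ∑ i, z i * (1 - (i.cast - j.cast) ^ (q - 1)) := by simp [hindicator]
    _ = _ := by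
        simp only [mul_sub, mul_one, Finset.sum_sub_distrib, hbinomial, shiftMoment, pow_zero,
          Finset.mul_sum, Finset.sum_mul, mul_assoc]
        rw [Finset.sum_comm]

omit [CharP F q] in
lemma shiftMoment_mem {E : Type*} [Field E] [Algebra E F] {L : IntermediateField E F}
    (hsum : ∑ i, z i ≠ 0) (hz : ∀ i, shiftInvariant z i ∈ L) {k : ℕ} (hk : k < q) :
    shiftMoment z k ∈ L := by
  obtain rfl | hk1 := eq_or_ne k 1
  · exact shiftMoment_one hsum ▸ zero_mem L
  · have hcast : (k : ZMod q).val = k := ZMod.val_cast_of_lt hk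
    have hne : (k : ZMod q) ≠ 1 := fun h => hk1 (by
      rw [← hcast, h, ZMod.val_one q])
    have := hz k
    rwa [shiftInvariant, if_neg hne, hcast] at this

theorem isShiftQuotient_shiftInvariant (hsum : ∑ i, z i ≠ 0) :
    IsShiftQuotient z (shiftInvariant z) where
  map_eq_self f e hf i := by
    unfold shiftInvariant
    split
    · rw [map_sub, map_pow, map_shiftMean hsum hf, sub_pow_char, ← ZMod.cast_pow', ZMod.pow_card,
        sub_sub_sub_cancel_right]
    · exact map_shiftMoment hsum hf _
  rank_adjoin_le E _ _ ht := by
    set L := E⟮shiftMean z⟯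
    have hbot : ⊥ ≤ L := bot_le
    have hcast (i : ZMod q) : (i.cast : F) ∈ L := by
      rw [← ZMod.natCast_val]
      exact _root_.natCast_mem L _
    have hmoment {k : ℕ} (hk : k < q) : shiftMoment z k ∈ L :=
      hbot (shiftMoment_mem hsum ht hk)
    have hz : Set.range z ⊆ L := by
      rintro _ ⟨j, rfl⟩
      rw [eq_sum_shiftMoment z j]
      refine sub_mem (hmoment (NeZero.pos q)) (sum_mem fun k hk => ?_)
      exact mul_mem (hmoment (Finset.mem_range.1 hk)) (mul_mem
        (pow_mem (sub_mem (mem_adjoin_simple_self E _) (hcast j)) _) (_root_.natCast_mem L _))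
    obtain ⟨a, ha⟩ := mem_bot.1 (ht 1)
    rw [shiftInvariant, if_pos rfl] at ha
    calc Module.rank E (adjoin E (Set.range z)) ≤ Module.rank E L := rank_adjoin_le_of_subset hz
      _ ≤ q := rank_adjoin_simple_le_of_pow_eq (P := Polynomial.X + Polynomial.C a) (by
        rw [Polynomial.degree_X_add_C]
        exact mod_cast (Fact.out : q.Prime).one_lt) (by simp [ha])

end EqualCharacteristic

section GroupAlgebra

open AddMonoidAlgebra Matrix

variable {q : ℕ}

/-- The endomorphism of the group algebra of `ZMod q` that extends multiplication by `k`. -/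
def dilation {R : Type*} [Semiring R] (k : ZMod q) :
    R[ZMod q] →+* R[ZMod q] :=
  mapDomainRingHom R (AddMonoidHom.mulLeft k)

lemma dilation_single {R : Type*} [Semiring R] (k i : ZMod q) (r : R) :
    dilation k (single i r) = single (k * i) r := by
  simp [dilation]

lemma dilation_dilation {R : Type*} [Semiring R] (k l : ZMod q)
    (x : R[ZMod q]) :
    dilation k (dilation l x) = dilation (k * l) x := by
  induction x using AddMonoidAlgebra.induction_linear with
  | zero => simp
  | add x y hx hy => simp only [map_add, hx, hy]
  | single i r => simp only [dilation_single, mul_assoc]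

lemma dilation_mapRingHom {R S : Type*} [Semiring R] [Semiring S] (f : R →+* S) (k : ZMod q)
    (x : R[ZMod q]) :
    dilation k (mapRingHom (ZMod q) f x) = mapRingHom (ZMod q) f (dilation k x) := by
  induction x using AddMonoidAlgebra.induction_linear with
  | zero => simp
  | add x y hx hy => simp only [map_add, hx, hy]
  | single i r => simp only [dilation_single, mapRingHom_single]

/-- The action of `dilation k` on the units of the group algebra. -/
def dilationUnits {R : Type*} [Semiring R] (k : ZMod q) :
    R[ZMod q]ˣ →* R[ZMod q]ˣ :=
  Units.map (dilation k).toMonoidHom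

/-- The units of the group algebra of `ZMod q` over `E`, inside those of the group algebra over the
extension `F`. -/
def rationalUnits (E F : Type*) [Field E] [Field F] [Algebra E F] (q : ℕ) :
    Subgroup F[ZMod q]ˣ :=
  (Units.map (mapRingHom (ZMod q) (algebraMap E F)).toMonoidHom).range

lemma dilationUnits_dilationUnits {R : Type*} [Semiring R] (k l : ZMod q) (u : R[ZMod q]ˣ) :
    dilationUnits k (dilationUnits l u) = dilationUnits (k * l) u :=
  Units.ext (dilation_dilation k l _)

variable {E : Type*} [Field E] [Algebra E F]

lemma dilationUnits_mem_rationalUnits {u : F[ZMod q]ˣ}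
    (hu : u ∈ rationalUnits E F q) (k : ZMod q) : dilationUnits k u ∈ rationalUnits E F q := by
  obtain ⟨v, rfl⟩ := hu
  exact ⟨dilationUnits k v, Units.ext (dilation_mapRingHom _ _ _).symm⟩

lemma coeff_mul_mem {u : F[ZMod q]ˣ} (hu : u ∈ rationalUnits E F q)
    {W : Submodule E F} {x : F[ZMod q]} (hx : ∀ i, x.coeff i ∈ W) (i : ZMod q) :
    (u.val * x).coeff i ∈ W := by
  obtain ⟨v, rfl⟩ := hu
  suffices ∀ (v : E[ZMod q]) i,
      (mapRingHom (ZMod q) (algebraMap E F) v * x).coeff i ∈ W from this v.val i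
  intro v
  induction v using AddMonoidAlgebra.induction_linear with
  | zero => simp
  | add v v' hv hv' =>
    intro i
    rw [map_add, add_mul, coeff_add]
    exact W.add_mem (hv i) (hv' i)
  | single j r =>
    intro i
    rw [mapRingHom_single, coeff_single_mul_apply, ← Algebra.smul_def]
    exact W.smul_mem r (hx _)

variable [NeZero q]

/-- The element of the group algebra of `ZMod q` with coefficients `z`. -/
def genericElement {R : Type*} [Semiring R] (z : ZMod q → R) : R[ZMod q] :=
  ∑ i, single i (z i)

lemma coeff_genericElement {R : Type*} [Semiring R] (z : ZMod q → R) (i : ZMod q) :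
    (genericElement z).coeff i = z i := by
  simp [genericElement, Finsupp.single_apply]

lemma dilation_genericElement {R : Type*} [Semiring R] (k : ZMod q) (z : ZMod q → R) :
    dilation k (genericElement z) = ∑ i, single (k * i) (z i) := by
  simp only [genericElement, map_sum, dilation_single]

lemma coeff_dilation_genericElement_mem {W : Submodule E F} {z : ZMod q → F} (hz : ∀ i, z i ∈ W)
    (k i : ZMod q) : (dilation k (genericElement z)).coeff i ∈ W := by
  simp only [dilation_genericElement, coeff_sum, Finsupp.coe_finsetSum, Finset.sum_apply,
    coeff_single, Finsupp.single_apply]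
  exact sum_mem fun j _ => ite_mem.2 ⟨fun _ => hz j, fun _ => zero_mem W⟩

lemma dilation_one_genericElement {R : Type*} [Semiring R] (z : ZMod q → R) :
    dilation 1 (genericElement z) = genericElement z := by
  simp only [dilation_genericElement, one_mul]
  rfl

lemma coeff_genericElement_mul_dilation {R : Type*} [Semiring R] (z w : ZMod q → R)
    (k m : ZMod q) :
    (genericElement z * dilation k (genericElement w)).coeff m = ∑ j, z (m - k * j) * w j := by
  simp only [dilation_genericElement, Finset.mul_sum, coeff_sum, Finsupp.coe_finsetSum,
    Finset.sum_apply, coeff_mul_single_apply, coeff_genericElement, sub_eq_add_neg]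

lemma genericElement_mul_genericElement {R : Type*} [Semiring R] (z w : ZMod q → R) :
    genericElement z * genericElement w = genericElement (circulant z *ᵥ w) := by
  ext m
  rw [← dilation_one_genericElement w, coeff_genericElement_mul_dilation, coeff_genericElement]
  simp only [one_mul, mulVec, dotProduct, circulant_apply]

lemma aeval_det_circulant_X {K A : Type*} [CommRing K] [CommRing A] [Algebra K A]
    (v : ZMod q → A) :
    MvPolynomial.aeval v (circulant (MvPolynomial.X (R := K))).det = (circulant v).det := by
  rw [AlgHom.map_det]
  congr 1
  ext i j
  simp [circulant]

lemma isUnit_genericElement {K : Type*} [CommRing K] [Nontrivial K] [Algebra K F]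
    {z : ZMod q → F} (hz : AlgebraicIndependent K z) : IsUnit (genericElement z) := by
  have hdet : (circulant z).det ≠ 0 := aeval_det_circulant_X (K := K) z ▸
    aeval_ne_zero_of_algebraicIndependent hz _ (a := Pi.single 0 1)
      (by rw [aeval_det_circulant_X, circulant_single_one, det_one]; exact one_ne_zero)
  refine IsUnit.of_mul_eq_one (genericElement ((circulant z)⁻¹ *ᵥ Pi.single 0 1)) ?_
  rw [genericElement_mul_genericElement, mulVec_mulVec,
    mul_nonsing_inv _ (isUnit_iff_ne_zero.2 hdet), one_mulVec]
  ext i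
  simp [coeff_genericElement, one_def, Finsupp.single_apply, Pi.single_apply, eq_comm]

lemma sum_add_mul_eq_ite [Fact q.Prime] {R : Type*} [Semiring R] (z : ZMod q → R)
    (a c : ZMod q) : ∑ k, z (a + k * c) = if c = 0 then q * z a else ∑ i, z i := by
  split_ifs with hc
  · simp [hc]
  · exact Equiv.sum_comp ((Equiv.mulRight₀ c hc).trans (Equiv.addLeft a)) z

lemma natCast_mul_mul_eq_sum_coeff [Fact q.Prime] {R : Type*} [CommRing R] (z : ZMod q → R)
    (a b : ZMod q) :
    q * (z a * z b) =
      ∑ k, (genericElement z * dilation k (genericElement z)).coeff (a + k * b) +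
        (genericElement z * dilation 0 (genericElement z)).coeff b -
        ∑ i, (genericElement z * dilation 0 (genericElement z)).coeff i := by
  have hsum : ∑ k, (genericElement z * dilation k (genericElement z)).coeff (a + k * b) =
      q * (z a * z b) - (∑ i, z i) * z b + (∑ i, z i) * ∑ i, z i := by
    calc _ = ∑ j, (∑ k, z (a + k * (b - j))) * z j := by
          simp only [coeff_genericElement_mul_dilation, Finset.sum_mul, mul_sub, add_sub_assoc]
          exact Finset.sum_comm
      _ = ∑ j, (if j = b then q * (z a * z b) - (∑ i, z i) * z b else 0) +
            ∑ j, (∑ i, z i) * z j := by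
          rw [← Finset.sum_add_distrib]
          refine Finset.sum_congr rfl fun j _ => ?_
          rw [sum_add_mul_eq_ite]
          obtain rfl | hj := eq_or_ne j b
          · simp [mul_assoc]
          · simp [hj, sub_ne_zero.2 hj.symm]
      _ = _ := by rw [Finset.sum_ite_eq', if_pos (Finset.mem_univ b), Finset.mul_sum]
  rw [hsum]
  simp only [coeff_genericElement_mul_dilation, zero_mul, sub_zero, ← Finset.mul_sum,
    ← Finset.sum_mul]
  ring

lemma mem_rationalUnits {u : F[ZMod q]ˣ}
    (hu : ∀ i, u.val.coeff i ∈ (⊥ : IntermediateField E F)) : u ∈ rationalUnits E F q := by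
  have : Module.Finite E (E[ZMod q]) :=
    Module.Finite.equiv (coeffLinearEquiv E).symm
  have : IsArtinianRing (E[ZMod q]) := IsArtinianRing.of_finite E _
  have hinj : Function.Injective (mapRingHom (ZMod q) (algebraMap E F)) :=
    map_injective (algebraMap E F : E →+ F) (algebraMap E F).injective
  choose c hc using fun i => IntermediateField.mem_bot.1 (hu i)
  have hval : mapRingHom (ZMod q) (algebraMap E F) (genericElement c) = u.val := by
    ext i
    rw [coeff_mapRingHom, coeff_genericElement]
    exact hc i
  have hunit : IsUnit (genericElement c) := by
    refine IsArtinianRing.isUnit_of_mem_nonZeroDivisors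
      (mem_nonZeroDivisors_iff_right.2 fun x hx => hinj ?_)
    rw [map_zero, ← Units.mul_left_eq_zero u, ← hval, ← map_mul, hx, map_zero]
  exact ⟨hunit.unit, Units.ext hval⟩

lemma mul_mem_of_coeff_mem [Fact q.Prime] (hq : (q : F) ≠ 0) {W : Submodule E F} {z : ZMod q → F}
    (h : ∀ k i, (genericElement z * dilation k (genericElement z)).coeff i ∈ W) (a b : ZMod q) :
    z a * z b ∈ W := by
  have hmem : (q : F) * (z a * z b) ∈ W := by
    rw [natCast_mul_mul_eq_sum_coeff]
    exact sub_mem (add_mem (sum_mem fun k _ => h k _) (h 0 b)) (sum_mem fun i _ => h 0 i)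
  have := W.smul_mem (q : E)⁻¹ hmem
  rwa [Algebra.smul_def, map_inv₀, map_natCast, inv_mul_cancel_left₀ hq] at this

lemma mapRingHom_genericElement {z : ZMod q → F} {f : F →+* F} {e : ZMod q}
    (hf : ∀ i, f (z i) = z (i + e)) :
    mapRingHom (ZMod q) f (genericElement z) = single (-e) 1 * genericElement z := by
  ext i
  rw [coeff_mapRingHom, coeff_single_mul_apply]
  simp only [coeff_genericElement, hf, one_mul, neg_neg, add_comm e]

/-- The unit `α(g) * α(g ^ 5) / α(g ^ 6)` attached to a unit `α(g)` of the group algebra of the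
cyclic group of order seven with generator `g`. It does not change when `α` is multiplied by a
power of `g`, and together with its dilations it accounts for the products of any two dilations of
`α`, up to a dilation of `α`. -/
def dilationQuotient {R : Type*} [CommSemiring R] (α : R[ZMod 7]ˣ) : R[ZMod 7]ˣ :=
  α * dilationUnits 5 α / dilationUnits 6 α

lemma map_coeff_dilationQuotient {z : ZMod 7 → F} {α : F[ZMod 7]ˣ} (hα : α.val = genericElement z)
    {f : F →+* F} {e : ZMod 7} (hf : ∀ i, f (z i) = z (i + e)) (i : ZMod 7) :
    f ((dilationQuotient α).val.coeff i) = (dilationQuotient α).val.coeff i := by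
  let φ : F[ZMod 7]ˣ →* F[ZMod 7]ˣ := Units.map (mapRingHom (ZMod 7) f).toMonoidHom
  let g : F[ZMod 7]ˣ := Units.map (of F (ZMod 7)) (toUnits (Multiplicative.ofAdd (-e)))
  have hφα : φ α = g * α := Units.ext <| by
    change mapRingHom (ZMod 7) f α.val = single (-e) 1 * α.val
    rw [hα, mapRingHom_genericElement hf]
  have hφ (k : ZMod 7) : φ (dilationUnits k α) = dilationUnits k g * dilationUnits k α := by
    rw [← map_mul, ← hφα]
    exact Units.ext (dilation_mapRingHom f k α.val).symm
  have hg : g * dilationUnits 5 g = dilationUnits 6 g := Units.ext <| by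
    change single (-e) 1 * dilation 5 (single (-e) 1) = dilation 6 (single (-e) (1 : F))
    rw [dilation_single, dilation_single, single_mul_single, one_mul]
    congr 1
    ring
  have hfixed : φ (dilationQuotient α) = dilationQuotient α := by
    rw [dilationQuotient, map_div, map_mul, hφ, hφ, hφα, mul_mul_mul_comm, hg,
      mul_div_mul_left_eq_div]
  exact congrArg (fun u : F[ZMod 7]ˣ => u.val.coeff i) hfixed

lemma exists_add_sub_mem {M : Type*} [AddCommGroup M] {a : ZMod 7 → M} {U : AddSubgroup M}
    (hU : ∀ k, a k + a (k * 5) - a (k * 6) ∈ U) (k : ZMod 7) :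
    ∃ b ∈ insert 0 (Set.range a), a 1 + a k - b ∈ U := by
  have h0 : a 0 + a 0 - a 0 ∈ U := hU 0
  have h1 : a 1 + a 5 - a 6 ∈ U := hU 1
  have h2 : a 2 + a 3 - a 5 ∈ U := hU 2
  have h3 : a 3 + a 1 - a 4 ∈ U := hU 3
  have h4 : a 4 + a 6 - a 3 ∈ U := hU 4
  have h5 : a 5 + a 4 - a 2 ∈ U := hU 5
  have h6 : a 6 + a 2 - a 1 ∈ U := hU 6
  have hcases : k = 0 ∨ k = 1 ∨ k = 2 ∨ k = 3 ∨ k = 4 ∨ k = 5 ∨ k = 6 := by decide +revert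
  have hrange (i : ZMod 7) : a i ∈ insert 0 (Set.range a) := Or.inr ⟨i, rfl⟩
  rcases hcases with rfl | rfl | rfl | rfl | rfl | rfl | rfl
  · exact ⟨a 1, hrange 1, by convert h0 using 1; abel⟩
  · exact ⟨a 2, hrange 2, by convert sub_mem (add_mem h3 h4) h6 using 1; abel⟩
  · exact ⟨a 3, hrange 3, by convert sub_mem (add_mem h1 h4) h5 using 1; abel⟩
  · exact ⟨a 4, hrange 4, by convert h3 using 1; abel⟩
  · exact ⟨a 5, hrange 5, by convert sub_mem (add_mem h2 h4) h6 using 1; abel⟩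
  · exact ⟨a 6, hrange 6, h1⟩
  · exact ⟨0, Or.inl rfl, by convert add_mem h3 h4 using 1; abel⟩

theorem isShiftQuotient_coeff_dilationQuotient (h7 : (7 : F) ≠ 0) {z : ZMod 7 → F}
    {α : F[ZMod 7]ˣ} (hα : α.val = genericElement z) :
    IsShiftQuotient z (dilationQuotient α).val.coeff where
  map_eq_self f e hf i := map_coeff_dilationQuotient hα hf i
  rank_adjoin_le E _ _ ht := by
    set W := Submodule.span E (Set.range z)
    have hz (i : ZMod 7) : z i ∈ W := Submodule.subset_span ⟨i, rfl⟩
    let U := rationalUnits E F 7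
    let a (k : ZMod 7) : F[ZMod 7]ˣ := dilationUnits k α
    have ha1 : (a 1).val = genericElement z := by
      change dilation 1 α.val = _
      rw [hα, dilation_one_genericElement]
    have hU (k : ZMod 7) : a k * a (k * 5) / a (k * 6) ∈ U := by
      simp only [a, ← dilationUnits_dilationUnits, ← map_mul, ← map_div]
      exact dilationUnits_mem_rationalUnits (mem_rationalUnits ht) k
    have haW (k i : ZMod 7) : (a k).val.coeff i ∈ W := by
      change (dilation k α.val).coeff i ∈ W
      exact hα ▸ coeff_dilation_genericElement_mem hz k i
    have honeW (i : ZMod 7) : (1 : F[ZMod 7]).coeff i ∈ W := by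
      have h0 : a 0 ∈ U := by simpa using hU 0
      have := coeff_mul_mem (inv_mem h0) (haW 0) i
      rwa [Units.inv_mul] at this
    have hprod (k i : ZMod 7) :
        (genericElement z * dilation k (genericElement z)).coeff i ∈ W := by
      obtain ⟨b, hb, hab⟩ : ∃ b ∈ insert 1 (Set.range a), a 1 * a k / b ∈ U :=
        exists_add_sub_mem (M := Additive F[ZMod 7]ˣ) (a := a) (U := U.toAddSubgroup) hU k
      have hbW (i : ZMod 7) : b.val.coeff i ∈ W := by
        obtain rfl | ⟨l, rfl⟩ := hb
        exacts [honeW i, haW l i]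
      have := coeff_mul_mem hab hbW i
      rw [← Units.val_mul, div_mul_cancel, Units.val_mul, ha1, ← hα] at this
      rwa [← hα]
    have : Fact (Nat.Prime 7) := ⟨by norm_num⟩
    exact mod_cast rank_adjoin_range_le_card z (by simpa using honeW 0)
      (mul_mem_of_coeff_mem (mod_cast h7) hprod)

end GroupAlgebra

theorem exists_isShiftQuotient {K : Type*} [Field K] [Algebra K F] {z : ZMod 7 → F}
    (hz : AlgebraicIndependent K z) : ∃ t, IsShiftQuotient z t := by
  by_cases h7 : (7 : F) = 0
  · have : Fact (Nat.Prime 7) := ⟨by norm_num⟩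
    have : CharP F 7 := (CharP.charP_iff_prime_eq_zero (by norm_num)).2 (mod_cast h7)
    have hsum : ∑ i, z i ≠ 0 := by
      simpa using aeval_ne_zero_of_algebraicIndependent hz (∑ i, MvPolynomial.X i)
        (a := Pi.single 0 1) (by simp)
    exact ⟨_, isShiftQuotient_shiftInvariant hsum⟩
  · obtain ⟨α, hα⟩ := isUnit_genericElement hz
    exact ⟨_, isShiftQuotient_coeff_dilationQuotient h7 hα⟩

end CyclicShift

/-! ### The affine group of order 56 -/

section AffineGroup

open IntermediateField

variable {K : Type*} {F : Type u} [Field K] [Field F] [Algebra K F] {X : F8 → F} {z t : ZMod 7 → F}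

lemma IsTranslationQuotient.rank_le (hz : IsTranslationQuotient X z)
    (hX : adjoin K (Set.range X) = ⊤) (E : Type u) [Field E] [Algebra K E] [Algebra E F]
    [IsScalarTower K E F] (hsum : ∑ v, X v ∈ (⊥ : IntermediateField E F))
    (hzE : ∀ i, z i ∈ (⊥ : IntermediateField E F)) : Module.rank E F ≤ 8 := by
  have := hz.rank_adjoin_le E hsum hzE
  rwa [adjoin_eq_top_of_adjoin_eq_top K hX, rank_top'] at this

/-- The sum of the family `X`, at `none`, together with the family `z`, at the other places. -/
def withSum (X : F8 → F) (z : ZMod 7 → F) (v : F8) : F := v.elim (∑ v, X v) z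

lemma IsTranslationQuotient.algebraicIndependent (hz : IsTranslationQuotient X z)
    (hX : AlgebraicIndependent K X) (htop : adjoin K (Set.range X) = ⊤) :
    AlgebraicIndependent K z := by
  have hmem (v : F8) :
      withSum X z v ∈ (⊥ : IntermediateField (adjoin K (Set.range (withSum X z))) F) :=
    mem_bot.2 ⟨⟨_, subset_adjoin K _ ⟨v, rfl⟩⟩, rfl⟩
  have hrank := hz.rank_le htop _ (hmem none) fun i => hmem (some i)
  exact (algebraicIndependent_of_rank_lt_aleph0 hX
    (hrank.trans_lt (Cardinal.ofNat_lt_aleph0))).comp some (Option.some_injective _)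

lemma rank_adjoin_withSum_le (htop : adjoin K (Set.range X) = ⊤)
    (hz : IsTranslationQuotient X z) (ht : IsShiftQuotient z t) :
    Module.rank (adjoin K (Set.range (withSum X t))) F ≤ (56 : ℕ) := by
  set E := adjoin K (Set.range (withSum X t))
  set L := adjoin E (Set.range z)
  have hmem (v : F8) : withSum X t v ∈ (⊥ : IntermediateField E F) :=
    mem_bot.2 ⟨⟨_, subset_adjoin K _ ⟨v, rfl⟩⟩, rfl⟩
  have hsum : ∑ v, X v ∈ (⊥ : IntermediateField L F) :=
    mem_bot.2 ⟨⟨_, bot_le (a := L) (hmem none)⟩, rfl⟩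
  have hzL (i : ZMod 7) : z i ∈ (⊥ : IntermediateField L F) :=
    mem_bot.2 ⟨⟨_, subset_adjoin E _ ⟨i, rfl⟩⟩, rfl⟩
  have : IsScalarTower K L F := IsScalarTower.of_algebraMap_eq' rfl
  calc Module.rank E F = Module.rank E L * Module.rank L F := (rank_mul_rank E L F).symm
    _ ≤ (7 : ℕ) * 8 := mul_le_mul' (ht.rank_adjoin_le E fun i => hmem (some i))
        (hz.rank_le htop L hsum hzL)
    _ = (56 : ℕ) := by norm_num

lemma map_withSum_of_translation (hz : IsTranslationQuotient X z) (ht : IsShiftQuotient z t)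
    {f : F →+* F} {j : ZMod 7} (hf : ∀ v, f (X v) = X (translation j v)) :
    ∀ v, f (withSum X t v) = withSum X t v
  | none => map_sum_of_map_eq hf
  | some i => ht.map_eq_self f 0 (fun i => by rw [hz.map_of_translation f j hf, add_zero]) i

lemma map_withSum_of_scaling (hz : IsTranslationQuotient X z) (ht : IsShiftQuotient z t)
    {f : F →+* F} (hf : ∀ v, f (X v) = X (scaling v)) : ∀ v, f (withSum X t v) = withSum X t v
  | none => map_sum_of_map_eq hf
  | some i => ht.map_eq_self f 1 (hz.map_of_scaling f hf) i

lemma dvd_card_of_affine {G : Subgroup (Equiv.Perm F8)} (h0 : translation 0 ∈ G)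
    (hs : scaling ∈ G) : 56 ∣ Nat.card G := by
  have horder : orderOf (⟨scaling, hs⟩ : G) = 7 := by
    have : Fact (Nat.Prime 7) := ⟨by norm_num⟩
    rw [Subgroup.orderOf_mk]
    exact orderOf_eq_prime (by decide) (by decide)
  have h7 : 7 ∣ Nat.card G := horder ▸ orderOf_dvd_natCard _
  have horbit : MulAction.orbit G (none : F8) = Set.univ := by
    refine Set.eq_univ_iff_forall.2 fun v => ?_
    have hreach : ∀ i : ZMod 7, (scaling ^ i.val * translation 0) none = some i := by decide
    cases v with
    | none => exact MulAction.mem_orbit_self _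
    | some i => exact ⟨⟨_, mul_mem (pow_mem hs i.val) h0⟩, hreach i⟩
  have h8 : 8 ∣ Nat.card G := by
    have hindex : (MulAction.stabilizer G (none : F8)).index = 8 := by
      rw [MulAction.index_stabilizer, horbit, Set.ncard_univ, Nat.card_eq_fintype_card]
      rfl
    exact hindex ▸ Subgroup.index_dvd_card _
  exact Nat.Coprime.mul_dvd_of_dvd_of_dvd (by norm_num) h8 h7

theorem isRatExt_fixedSub_closure_of_affine (K : Type) [Field K] {I : Type} (e : F8 ≃ I)
    {S : Set (Equiv.Perm F8)} (h0 : translation 0 ∈ S) (hs : scaling ∈ S)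
    (hS : ∀ σ ∈ S, σ = scaling ∨ ∃ j, σ = translation j) :
    IsRatExt K (fixedSub K I (Subgroup.closure (e.permCongrHom '' S))) := by
  have := Finite.of_equiv _ e
  set X : F8 → RFF K I := Xvar K I ∘ e with hX
  have hXind : AlgebraicIndependent K X := (algebraicIndependent_Xvar K I).comp e e.injective
  have htop : adjoin K (Set.range X) = ⊤ := by
    rw [hX, e.surjective.range_comp, adjoin_range_Xvar]
  obtain ⟨z, hz⟩ := exists_isTranslationQuotient hXind
  obtain ⟨t, ht⟩ := exists_isShiftQuotient (hz.algebraicIndependent hXind htop)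
  have hperm (σ : Equiv.Perm F8) (v : F8) :
      (permHom K I (e.permCongrHom σ) : RFF K I →+* RFF K I) (X v) = X (σ v) := by
    simp [hX, permHom_Xvar]
  refine isRatExt_fixedSub K _ (w := withSum X t ∘ e.symm) (fun i => ?_) ?_
  · refine mem_fixedSub_closure K ?_
    rintro _ ⟨σ, hσ, rfl⟩
    obtain rfl | ⟨j, rfl⟩ := hS σ hσ
    · exact map_withSum_of_scaling hz ht (hperm scaling) _
    · exact map_withSum_of_translation hz ht (hperm (translation j)) _
  · have hcard : Nat.card (Subgroup.closure (e.permCongrHom '' S)) =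
        Nat.card (Subgroup.closure S) := by
      rw [← MulEquiv.coe_toMonoidHom, ← MonoidHom.map_closure]
      exact Subgroup.card_map_of_injective e.permCongrHom.injective
    rw [e.symm.surjective.range_comp, hcard]
    refine (rank_adjoin_withSum_le htop hz ht).trans (Nat.cast_le.2 (Nat.le_of_dvd Nat.card_pos
      (dvd_card_of_affine (Subgroup.subset_closure h0) (Subgroup.subset_closure hs))))

end AffineGroup

/-- The labelling of `𝔽₈` by `Fin 8` for which the generators of `G₂₅` are the translations by
`ζ ^ 0`, `ζ ^ 1`, `ζ ^ 4` and the multiplication by `ζ`. -/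
def label : F8 ≃ Fin 8 where
  toFun v := v.elim 0 ![1, 2, 6, 3, 4, 5, 7]
  invFun := ![none, some 0, some 1, some 3, some 4, some 5, some 2, some 6]
  left_inv := by unfold Function.LeftInverse; decide
  right_inv := by unfold Function.RightInverse Function.LeftInverse; decide

lemma image_label_permCongrHom :
    label.permCongrHom '' {translation 0, translation 1, translation 4, scaling} =
      {Equiv.swap (0 : Fin 8) 1 * Equiv.swap 2 3 * Equiv.swap 4 5 * Equiv.swap 6 7,
       Equiv.swap (0 : Fin 8) 2 * Equiv.swap 1 3 * Equiv.swap 4 6 * Equiv.swap 5 7,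
       Equiv.swap (0 : Fin 8) 4 * Equiv.swap 1 5 * Equiv.swap 2 6 * Equiv.swap 3 7,
       Equiv.swap (1 : Fin 8) 2 * Equiv.swap 2 6 * Equiv.swap 6 3 * Equiv.swap 3 4 *
         Equiv.swap 4 5 * Equiv.swap 5 7} := by
  simp only [Set.image_insert_eq, Set.image_singleton]
  congr! 3
  · decide
  · decide
  · decide
  · exact congrArg _ (by decide)

/-- **Rationality for `G₂₅`.** For any field `K`, the subgroup `G₂₅ ⊆ S₈` of order 56 generated by `σ₁`, `σ₂`, `κ` and `θ = (2,3,7,4,5,6,8)` has `K`-rational fixed field. -/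
theorem rationality_G25 (K : Type) [Field K] :
    IsRatExt K ↥(fixedSub K (Fin 8) (Subgroup.closure
      {Equiv.swap (0 : Fin 8) 1 * Equiv.swap 2 3 * Equiv.swap 4 5 * Equiv.swap 6 7,
       Equiv.swap (0 : Fin 8) 2 * Equiv.swap 1 3 * Equiv.swap 4 6 * Equiv.swap 5 7,
       Equiv.swap (0 : Fin 8) 4 * Equiv.swap 1 5 * Equiv.swap 2 6 * Equiv.swap 3 7,
       Equiv.swap (1 : Fin 8) 2 * Equiv.swap 2 6 * Equiv.swap 6 3 * Equiv.swap 3 4 * Equiv.swap 4 5 * Equiv.swap 5 7})) := by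
  rw [← image_label_permCongrHom]
  refine isRatExt_fixedSub_closure_of_affine K label (by simp) (by simp) ?_
  rintro σ (rfl | rfl | rfl | rfl)
  exacts [Or.inr ⟨0, rfl⟩, Or.inr ⟨1, rfl⟩, Or.inr ⟨4, rfl⟩, Or.inl rfl]
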